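/- Every compact polynomially convex set K ⊆ ℂⁿ is the zero set of a nonnegative plurisubharmonic exhaustion function ρ : ℂⁿ → [0, ∞) which is strongly plurisubharmonic on ℂⁿ \ K. -/

import Mathlib

noncomputable section
open Set Metric MvPolynomial

/-- The polynomially convex hull of a set in `ℂⁿ`. -/
def polyHull {n : ℕ} (K : Set (EuclideanSpace ℂ (Fin n))) : Set (EuclideanSpace ℂ (Fin n)) :=
  {z | ∀ p : MvPolynomial (Fin n) ℂ,
    ‖eval (fun i => z i) p‖ ≤ sSup ((fun w => ‖eval (fun i => w i) p‖) '' K)}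

/-- A compact set in `ℂⁿ` is polynomially convex if it equals its polynomial hull. -/
def IsPolyConvex {n : ℕ} (K : Set (EuclideanSpace ℂ (Fin n))) : Prop :=
  polyHull K = K

/-- Polynomial hull for subsets of a product `ℂᴺ × ℂⁿ ≅ ℂ^{N+n}`, using polynomials in the
`N + n` coordinates. -/
def polyHull2 {N n : ℕ} (S : Set (EuclideanSpace ℂ (Fin N) × EuclideanSpace ℂ (Fin n))) :
    Set (EuclideanSpace ℂ (Fin N) × EuclideanSpace ℂ (Fin n)) :=
  {z | ∀ p : MvPolynomial (Fin N ⊕ Fin n) ℂ,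
    ‖eval (Sum.elim (fun i => z.1 i) (fun j => z.2 j)) p‖ ≤
      sSup ((fun w => ‖eval (Sum.elim (fun i => w.1 i) (fun j => w.2 j)) p‖) '' S)}

def IsPolyConvex2 {N n : ℕ} (S : Set (EuclideanSpace ℂ (Fin N) × EuclideanSpace ℂ (Fin n))) :
    Prop :=
  polyHull2 S = S

/-- A function `u : ℂ → ℝ` is subharmonic on an open set `U ⊆ ℂ`: it is upper semicontinuous on
`U` and satisfies the sub-mean value inequality over circles whose closed discs lie in `U`. -/
def SubharmonicOnC (u : ℂ → ℝ) (U : Set ℂ) : Prop :=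
  UpperSemicontinuousOn u U ∧ ∀ c : ℂ, ∀ r : ℝ, 0 < r → closedBall c r ⊆ U →
    u c ≤ (2 * Real.pi)⁻¹ * ∫ θ in (0:ℝ)..(2 * Real.pi), u (c + r * Complex.exp (θ * Complex.I))

/-- `ρ` is plurisubharmonic on `U ⊆ ℂⁿ`: upper semicontinuous on `U` and subharmonic on every
complex line. -/
def PshOn {n : ℕ} (ρ : EuclideanSpace ℂ (Fin n) → ℝ) (U : Set (EuclideanSpace ℂ (Fin n))) :
    Prop :=
  UpperSemicontinuousOn ρ U ∧ ∀ a b : EuclideanSpace ℂ (Fin n),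
    SubharmonicOnC (fun t : ℂ => ρ (a + t • b)) {t : ℂ | a + t • b ∈ U}

/-- `ρ` is strongly plurisubharmonic on the open set `U`: near every point of `U` one may
subtract a small positive multiple of `‖·‖²` and stay plurisubharmonic. -/
def StronglyPshOn {n : ℕ} (ρ : EuclideanSpace ℂ (Fin n) → ℝ)
    (U : Set (EuclideanSpace ℂ (Fin n))) : Prop :=
  ∀ x ∈ U, ∃ ε : ℝ, 0 < ε ∧ ∃ V : Set (EuclideanSpace ℂ (Fin n)),
    IsOpen V ∧ x ∈ V ∧ V ⊆ U ∧ PshOn (fun z => ρ z - ε * ‖z - x‖ ^ 2) V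

/-- `ρ` is an exhaustion function: all sublevel sets are compact. -/
def IsExhaustion {n : ℕ} (ρ : EuclideanSpace ℂ (Fin n) → ℝ) : Prop :=
  ∀ c : ℝ, IsCompact {z : EuclideanSpace ℂ (Fin n) | ρ z ≤ c}

/-!
A point `x ∉ K` is separated from `K` by a polynomial `p`, so for small `δ > 0` and a suitable
constant `C` the strongly plurisubharmonic exhaustion `‖p‖ + δ * ‖z‖ ^ 2 - C` is nonpositive on `K`
and positive at `x`. By Lindelöf, countably many such barriers detect every point off `K`. The sum
of their positive parts with rapidly decreasing positive weights vanishes exactly on `K`, and near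
`x ∉ K` one summand is still strongly plurisubharmonic, its barrier being positive there.

The needed plurisubharmonicity all comes from one source: a continuous function is plurisubharmonic
when it is a pointwise supremum of continuous plurisubharmonic functions, such as real parts of
holomorphic functions.
-/

open Filter TopologicalSpace

section ContPshOn

variable {E F ι : Type*} [NormedAddCommGroup E] [NormedSpace ℂ E]
  [NormedAddCommGroup F] [NormedSpace ℂ F] {f g : E → ℝ} {U V : Set E}

/-- Continuous plurisubharmonic functions on a set `U` of a complex normed space. Reparametrizing
the line, the sub-mean value inequality is only imposed on unit discs `t ↦ a + t • b`. -/
structure ContPshOn (f : E → ℝ) (U : Set E) : Prop where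
  continuousOn : ContinuousOn f U
  le_circleAverage : ∀ a b : E, MapsTo (fun t : ℂ => a + t • b) (closedBall 0 1) U →
    f a ≤ Real.circleAverage (fun t => f (a + t • b)) 0 1

lemma circleIntegrable_comp_line (hf : ContinuousOn f U) {a b : E}
    (hab : MapsTo (fun t : ℂ => a + t • b) (closedBall 0 1) U) :
    CircleIntegrable (fun t => f (a + t • b)) 0 1 :=
  ((hf.comp (by fun_prop) hab).mono sphere_subset_closedBall).circleIntegrable zero_le_one

namespace ContPshOn

lemma mono (hf : ContPshOn f U) (hVU : V ⊆ U) : ContPshOn f V :=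
  ⟨hf.continuousOn.mono hVU, fun a b hab => hf.le_circleAverage a b (hab.mono_right hVU)⟩

lemma congr (hf : ContPshOn f U) (hfg : EqOn g f U) : ContPshOn g U := by
  refine ⟨hf.continuousOn.congr hfg, fun a b hab => ?_⟩
  have ha : a ∈ U := by simpa using hab (mem_closedBall_self zero_le_one)
  have havg : Real.circleAverage (fun t => g (a + t • b)) 0 1 =
      Real.circleAverage (fun t => f (a + t • b)) 0 1 :=
    Real.circleAverage_congr_sphere fun t ht =>
      hfg (hab (sphere_subset_closedBall (by simpa using ht)))
  rw [hfg ha, havg]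
  exact hf.le_circleAverage a b hab

lemma add (hf : ContPshOn f U) (hg : ContPshOn g U) : ContPshOn (fun z => f z + g z) U := by
  refine ⟨hf.continuousOn.add hg.continuousOn, fun a b hab => ?_⟩
  rw [Real.circleAverage_fun_add (circleIntegrable_comp_line hf.continuousOn hab)
    (circleIntegrable_comp_line hg.continuousOn hab)]
  exact add_le_add (hf.le_circleAverage a b hab) (hg.le_circleAverage a b hab)

lemma const_mul {w : ℝ} (hw : 0 ≤ w) (hf : ContPshOn f U) : ContPshOn (fun z => w * f z) U := by
  refine ⟨hf.continuousOn.const_mul w, fun a b hab => ?_⟩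
  have havg : Real.circleAverage (fun t => w * f (a + t • b)) 0 1 =
      w * Real.circleAverage (fun t => f (a + t • b)) 0 1 :=
    Real.circleAverage_fun_smul (a := w) (f := fun t => f (a + t • b))
  rw [havg]
  exact mul_le_mul_of_nonneg_left (hf.le_circleAverage a b hab) hw

lemma of_re {h : E → ℂ} (hh : DifferentiableOn ℂ h U) : ContPshOn (fun z => (h z).re) U := by
  have hre : ContinuousOn (fun z => (h z).re) U :=
    Complex.continuous_re.comp_continuousOn hh.continuousOn
  refine ⟨hre, fun a b hab => ?_⟩
  have hline : DifferentiableOn ℂ (fun t : ℂ => h (a + t • b)) (closedBall 0 1) :=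
    hh.comp (by fun_prop) hab
  have hint : CircleIntegrable (fun t : ℂ => h (a + t • b)) 0 1 :=
    (hline.continuousOn.mono sphere_subset_closedBall).circleIntegrable zero_le_one
  have hmean : Real.circleAverage (fun t : ℂ => h (a + t • b)) 0 1 = h a := by
    have hd : DiffContOnCl ℂ (fun t : ℂ => h (a + t • b)) (ball 0 |1|) :=
      hline.diffContOnCl_ball (by simp)
    simpa using hd.circleAverage
  rw [← hmean]
  exact (Complex.reCLM.circleAverage_comp_comm hint).ge

lemma const (c : ℝ) : ContPshOn (fun _ : E => c) U :=
  of_re (h := fun _ => (c : ℂ)) (differentiableOn_const _)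

lemma sum (s : Finset ι) {f : ι → E → ℝ} (hf : ∀ i ∈ s, ContPshOn (f i) U) :
    ContPshOn (fun z => ∑ i ∈ s, f i z) U := by
  have h := Finset.sum_induction f (ContPshOn · U) (fun _ _ => add) (const 0) hf
  simpa only [Finset.sum_fn] using h

lemma of_forall_lt_exists_minorant (hf : ContinuousOn f U)
    (h : ∀ a ∈ U, ∀ c < f a, ∃ g, ContPshOn g U ∧ (∀ z ∈ U, g z ≤ f z) ∧ c < g a) :
    ContPshOn f U := by
  refine ⟨hf, fun a b hab => le_of_forall_lt fun c hc => ?_⟩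
  have ha : a ∈ U := by simpa using hab (mem_closedBall_self zero_le_one)
  obtain ⟨g, hg, hgf, hcg⟩ := h a ha c hc
  calc c < g a := hcg
    _ ≤ Real.circleAverage (fun t => g (a + t • b)) 0 1 := hg.le_circleAverage a b hab
    _ ≤ Real.circleAverage (fun t => f (a + t • b)) 0 1 :=
      Real.circleAverage_mono (circleIntegrable_comp_line hg.continuousOn hab)
        (circleIntegrable_comp_line hf hab) fun t ht =>
          hgf _ (hab (sphere_subset_closedBall (by simpa using ht)))

lemma max (hf : ContPshOn f U) (hg : ContPshOn g U) : ContPshOn (fun z => max (f z) (g z)) U := by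
  refine of_forall_lt_exists_minorant (hf.continuousOn.sup hg.continuousOn) fun a _ c hc => ?_
  rcases lt_max_iff.mp hc with hcf | hcg
  · exact ⟨f, hf, fun _ _ => le_max_left _ _, hcf⟩
  · exact ⟨g, hg, fun _ _ => le_max_right _ _, hcg⟩

/- By Hahn–Banach, `‖h‖` is the pointwise maximum of `Re (φ ∘ h)` over functionals `‖φ‖ ≤ 1`. -/
lemma of_norm {h : E → F} (hh : DifferentiableOn ℂ h U) : ContPshOn (fun z => ‖h z‖) U := by
  refine of_forall_lt_exists_minorant hh.continuousOn.norm fun a _ c hc => ?_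
  obtain ⟨φ, hφ, hφa⟩ := exists_dual_vector'' ℂ (h a)
  refine ⟨fun z => (φ (h z)).re, of_re (φ.differentiable.comp_differentiableOn hh),
    fun z _ => ?_, by simpa [hφa] using hc⟩
  exact (Complex.re_le_norm _).trans (φ.le_of_opNorm_le_of_le hφ le_rfl |>.trans_eq (one_mul _))

lemma tsum {f : ι → C(E, ℝ)} (hs : Summable f) (hf : ∀ i, ContPshOn (f i) U) (h0 : ∀ i, 0 ≤ f i) :
    ContPshOn (∑' i, f i : C(E, ℝ)) U := by
  refine of_forall_lt_exists_minorant (map_continuous _).continuousOn fun a _ c hc => ?_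
  have hsum (z : E) : HasSum (fun i => f i z) ((∑' i, f i : C(E, ℝ)) z) :=
    ContinuousMap.hasSum_apply hs.hasSum z
  obtain ⟨s, hcs⟩ := ((hsum a).eventually_const_lt hc).exists
  exact ⟨fun z => ∑ i ∈ s, f i z, sum s fun i _ => hf i,
    fun z _ => sum_le_hasSum s (fun i _ => h0 i z) (hsum z), hcs⟩

lemma tsum_sub {f : ι → C(E, ℝ)} (hs : Summable f) (hf : ∀ i, ContPshOn (f i) U)
    (h0 : ∀ i, 0 ≤ f i) (i : ι) (hg : ContPshOn (fun z => f i z - g z) U) :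
    ContPshOn (fun z => (∑' j, f j : C(E, ℝ)) z - g z) U := by
  classical
  have hrest : ContPshOn (∑' j, if j = i then 0 else f j : C(E, ℝ)) U := by
    refine tsum ?_ (fun j => ?_) fun j => ?_
    · exact (hs.update i 0).congr fun j => by rw [Function.update_apply]
    · split_ifs
      exacts [const 0, hf j]
    · split_ifs
      exacts [le_rfl, h0 j]
  refine (hg.add hrest).congr fun z _ => ?_
  rw [hs.tsum_eq_add_tsum_ite i, ContinuousMap.add_apply]
  ring

end ContPshOn

end ContPshOn

section InnerProductSpace

variable {E : Type*} [NormedAddCommGroup E] [InnerProductSpace ℂ E] {f : E → ℝ} {U : Set E}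

lemma re_two_mul_inner_sub_norm_sq (a z : E) :
    (2 * inner ℂ a z - ‖a‖ ^ 2 : ℂ).re = ‖z‖ ^ 2 - ‖z - a‖ ^ 2 := by
  have hre : (2 * inner ℂ a z - ‖a‖ ^ 2 : ℂ).re = 2 * (inner ℂ a z).re - ‖a‖ ^ 2 := by
    simp [← Complex.ofReal_pow]
  have hexp := norm_sub_sq (𝕜 := ℂ) a z
  rw [norm_sub_rev, RCLike.re_eq_complex_re] at hexp
  linarith

lemma contPshOn_norm_sq_sub_norm_sub_sq (a : E) :
    ContPshOn (fun z => ‖z‖ ^ 2 - ‖z - a‖ ^ 2) U := by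
  simp only [← re_two_mul_inner_sub_norm_sq]
  exact .of_re (((innerSL ℂ a).differentiable.const_mul 2).sub_const _).differentiableOn

lemma contPshOn_norm_sq : ContPshOn (fun z : E => ‖z‖ ^ 2) U := by
  refine .of_forall_lt_exists_minorant (by fun_prop) fun a _ c hc => ?_
  exact ⟨_, contPshOn_norm_sq_sub_norm_sub_sq a,
    fun z _ => sub_le_self _ (sq_nonneg _), by simpa using hc⟩

lemma ContPshOn.sub_mul_norm_sub_sq {ε : ℝ} (hε : 0 ≤ ε)
    (hf : ContPshOn (fun z => f z - ε * ‖z‖ ^ 2) U) (x : E) :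
    ContPshOn (fun z => f z - ε * ‖z - x‖ ^ 2) U :=
  (hf.add ((contPshOn_norm_sq_sub_norm_sub_sq x).const_mul hε)).congr fun z _ => by ring

end InnerProductSpace

lemma exists_pos_summable_smul {X F : Type*} [TopologicalSpace X] [LocallyCompactSpace X]
    [SigmaCompactSpace X] [NormedAddCommGroup F] [NormedSpace ℝ F] [CompleteSpace F]
    (f : ℕ → C(X, F)) : ∃ w : ℕ → ℝ, (∀ j, 0 < w j) ∧ Summable fun j => w j • f j := by
  let Q : CompactExhaustion X := default
  let P (j : ℕ) : Compacts X := ⟨Q j, Q.isCompact j⟩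
  let w (j : ℕ) : ℝ := (1 / 2) ^ j / (1 + ‖(f j).restrict (P j)‖)
  refine ⟨w, fun j => by positivity, ContinuousMap.summable_of_locally_summable_norm fun L => ?_⟩
  obtain ⟨k, hk⟩ := Q.exists_superset_of_isCompact L.isCompact
  refine summable_geometric_two.of_norm_bounded_eventually_nat ?_
  filter_upwards [eventually_ge_atTop k] with j hj
  rw [norm_norm, ContinuousMap.norm_le _ (by positivity)]
  intro x
  let y : P j := ⟨x, Q.subset hj (hk x.2)⟩
  have hx : ‖f j x‖ ≤ ‖(f j).restrict (P j)‖ := ((f j).restrict (P j)).norm_coe_le_norm y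
  calc ‖w j • f j x‖ = (1 / 2) ^ j * (‖f j x‖ / (1 + ‖(f j).restrict (P j)‖)) := by
        rw [norm_smul, Real.norm_of_nonneg (by positivity)]
        ring
    _ ≤ (1 / 2) ^ j := by
        refine mul_le_of_le_one_right (by positivity) (div_le_one_of_le₀ ?_ (by positivity))
        linarith

section IsBarrier

variable {E F : Type*} [NormedAddCommGroup E] [InnerProductSpace ℂ E]
  [NormedAddCommGroup F] [NormedSpace ℂ F] {K : Set E} {g : E → ℝ}

/-- A barrier for `K`: a continuous exhaustion function, nonpositive on `K`, that stays
plurisubharmonic after subtracting a small positive multiple of `‖·‖ ^ 2`. The positive parts of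
barriers are the building blocks of the function vanishing exactly on `K`. -/
structure IsBarrier (K : Set E) (g : E → ℝ) : Prop where
  nonpos : ∀ z ∈ K, g z ≤ 0
  tendsto_atTop : Tendsto g (cocompact E) atTop
  exists_sub_norm_sq : ∃ ε > 0, ContPshOn (fun z => g z - ε * ‖z‖ ^ 2) univ

namespace IsBarrier

lemma contPshOn (hg : IsBarrier K g) : ContPshOn g univ := by
  obtain ⟨ε, hε, hgε⟩ := hg.exists_sub_norm_sq
  exact (hgε.add (contPshOn_norm_sq.const_mul hε.le)).congr fun z _ => by ring

lemma continuous (hg : IsBarrier K g) : Continuous g :=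
  continuousOn_univ.mp hg.contPshOn.continuousOn

/-- The positive part `max 0 g` of a barrier, as an element of `C(E, ℝ)`, where the topology of
locally uniform convergence makes sense of series. -/
def posPart (hg : IsBarrier K g) : C(E, ℝ) :=
  ⟨fun z => max 0 (g z), continuous_const.max hg.continuous⟩

lemma contPshOn_posPart (hg : IsBarrier K g) : ContPshOn hg.posPart univ :=
  (ContPshOn.const 0).max hg.contPshOn

lemma exists_posPart_sub_norm_sq (hg : IsBarrier K g) :
    ∃ ε > 0, ContPshOn (fun z => hg.posPart z - ε * ‖z‖ ^ 2) {z | 0 < g z} := by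
  obtain ⟨ε, hε, hgε⟩ := hg.exists_sub_norm_sq
  refine ⟨ε, hε, (hgε.mono (subset_univ _)).congr fun z (hz : 0 < g z) => ?_⟩
  change max 0 (g z) - _ = _
  rw [max_eq_right hz.le]

lemma norm_add_norm_sq [ProperSpace E] {h : E → F} (hh : Differentiable ℂ h) {δ C : ℝ} (hδ : 0 < δ)
    (hC : ∀ z ∈ K, ‖h z‖ + δ * ‖z‖ ^ 2 ≤ C) :
    IsBarrier K fun z => ‖h z‖ + δ * ‖z‖ ^ 2 - C where
  nonpos z hz := sub_nonpos.mpr (hC z hz)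
  tendsto_atTop := by
    have hsq : Tendsto (fun z : E => δ * ‖z‖ ^ 2) (cocompact E) atTop :=
      ((tendsto_pow_atTop two_ne_zero).comp (tendsto_norm_cocompact_atTop)).const_mul_atTop hδ
    exact tendsto_atTop_add_const_right _ (-C)
      (tendsto_atTop_mono (fun z => le_add_of_nonneg_left (norm_nonneg (h z))) hsq)
  exists_sub_norm_sq :=
    ⟨δ, hδ, ((ContPshOn.of_norm hh.differentiableOn).add (.const (-C))).congr fun z _ => by ring⟩

end IsBarrier

variable [ProperSpace E]

lemma exists_isBarrier_pos_of_norm_lt (hK : IsCompact K) {h : E → F} (hh : Differentiable ℂ h)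
    {x : E} {s : ℝ} (hs : ∀ z ∈ K, ‖h z‖ ≤ s) (hx : s < ‖h x‖) :
    ∃ g, IsBarrier K g ∧ 0 < g x := by
  obtain ⟨R, hR⟩ := hK.bddAbove_image (f := fun z => ‖z‖ ^ 2) (by fun_prop)
  obtain ⟨δ, hδ, hδR⟩ := exists_pos_mul_lt (sub_pos.mpr hx) R
  refine ⟨_, IsBarrier.norm_add_norm_sq (C := s + R * δ) hh hδ fun z hz => ?_, ?_⟩
  · rw [mul_comm δ]
    gcongr
    exacts [hs z hz, hR (mem_image_of_mem _ hz)]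
  · have : 0 ≤ δ * ‖x‖ ^ 2 := by positivity
    linarith

lemma exists_isBarrier (hK : IsCompact K) : ∃ g, IsBarrier K g := by
  obtain ⟨C, hC⟩ := hK.bddAbove_image (f := fun z => ‖z‖ ^ 2) (by fun_prop)
  exact ⟨_, .norm_add_norm_sq (h := fun _ => (0 : ℂ)) (differentiable_const _) one_pos
    fun z hz => by simpa using hC (mem_image_of_mem _ hz)⟩

lemma exists_isBarrier_seq (hK : IsCompact K) (hsep : ∀ x ∉ K, ∃ g, IsBarrier K g ∧ 0 < g x) :
    ∃ g : ℕ → E → ℝ, (∀ j, IsBarrier K (g j)) ∧ ∀ x ∉ K, ∃ j, 0 < g j x := by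
  have : SecondCountableTopology E := secondCountable_of_proper
  have : Nonempty {g // IsBarrier K g} := nonempty_subtype.mpr (exists_isBarrier hK)
  have hcover : Kᶜ ⊆ ⋃ g : {g // IsBarrier K g}, {x | 0 < g.1 x} := fun x hx => by
    obtain ⟨g, hg, hgx⟩ := hsep x hx
    exact mem_iUnion.mpr ⟨⟨g, hg⟩, hgx⟩
  obtain ⟨g, hg⟩ := (HereditarilyLindelofSpace.isLindelof Kᶜ).indexed_countable_subcover _
    (fun g => isOpen_lt continuous_const g.2.continuous) hcover
  exact ⟨fun j => g j, fun j => (g j).2, fun x hx => mem_iUnion.mp (hg hx)⟩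

theorem exists_contPshOn_exhaustion (hK : IsCompact K)
    (hsep : ∀ x ∉ K, ∃ g, IsBarrier K g ∧ 0 < g x) :
    ∃ ρ : C(E, ℝ), (∀ z, 0 ≤ ρ z) ∧ ContPshOn ρ univ ∧ Tendsto ρ (cocompact E) atTop ∧
      {z | ρ z = 0} = K ∧ ∀ x ∈ Kᶜ, ∃ ε > 0, ∃ V, IsOpen V ∧ x ∈ V ∧ V ⊆ Kᶜ ∧
        ContPshOn (fun z => ρ z - ε * ‖z‖ ^ 2) V := by
  obtain ⟨g, hg, hpos⟩ := exists_isBarrier_seq hK hsep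
  obtain ⟨w, hw, hs⟩ := exists_pos_summable_smul fun j => (hg j).posPart
  have hpsh (j : ℕ) : ContPshOn (w j • (hg j).posPart) univ :=
    (hg j).contPshOn_posPart.const_mul (hw j).le
  have h0 (j : ℕ) : 0 ≤ w j • (hg j).posPart := fun z =>
    mul_nonneg (hw j).le (le_max_left 0 (g j z))
  let ρ : C(E, ℝ) := ∑' j, w j • (hg j).posPart
  have hρ (z : E) : HasSum (fun j => w j * max 0 (g j z)) (ρ z) :=
    ContinuousMap.hasSum_apply hs.hasSum z
  refine ⟨ρ, fun z => (hρ z).nonneg fun j => h0 j z, .tsum hs hpsh h0, ?_, ?_, fun x hx => ?_⟩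
  · refine tendsto_atTop_mono (fun z => ?_) ((hg 0).tendsto_atTop.const_mul_atTop (hw 0))
    calc w 0 * g 0 z ≤ w 0 * max 0 (g 0 z) :=
          mul_le_mul_of_nonneg_left (le_max_right _ _) (hw 0).le
      _ ≤ ρ z := le_hasSum (hρ z) 0 fun j _ => h0 j z
  · ext z
    have hρ0 : ρ z = 0 ↔ ∀ j, g j z ≤ 0 := by
      have hterm (j : ℕ) : 0 ≤ w j * max 0 (g j z) := h0 j z
      rw [← (hρ z).tsum_eq, ← (hρ z).summable.hasSum_iff, hasSum_zero_iff_of_nonneg hterm,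
        funext_iff]
      simp [(hw _).ne']
    rw [mem_ofPred_eq, hρ0]
    refine ⟨fun hz => ?_, fun hz j => (hg j).nonpos z hz⟩
    by_contra hzK
    obtain ⟨j, hj⟩ := hpos z hzK
    exact (hz j).not_gt hj
  · obtain ⟨i, hi⟩ := hpos x hx
    obtain ⟨ε, hε, hgε⟩ := (hg i).exists_posPart_sub_norm_sq
    refine ⟨w i * ε, mul_pos (hw i) hε, {z | 0 < g i z}, isOpen_lt continuous_const
      (hg i).continuous, hi, fun z hz hzK => ((hg i).nonpos z hzK).not_gt hz, ?_⟩
    refine .tsum_sub hs (fun j => (hpsh j).mono (subset_univ _)) h0 i ?_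
    refine (hgε.const_mul (hw i).le).congr fun z _ => ?_
    rw [ContinuousMap.smul_apply, smul_eq_mul]
    ring

end IsBarrier

section EuclideanSpace

variable {n : ℕ}

lemma ContPshOn.pshOn {f : EuclideanSpace ℂ (Fin n) → ℝ} {U : Set (EuclideanSpace ℂ (Fin n))}
    (hf : ContPshOn f U) : PshOn f U := by
  refine ⟨hf.continuousOn.upperSemicontinuousOn, fun a b => ⟨?_, fun c r hr hcr => ?_⟩⟩
  · exact (hf.continuousOn.comp (f := fun t : ℂ => a + t • b) (by fun_prop)
      fun t ht => ht).upperSemicontinuousOn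
  have hline (t : ℂ) : a + c • b + t • (r : ℂ) • b = a + (c + r * t) • b := by module
  have hmaps : MapsTo (fun t : ℂ => a + c • b + t • (r : ℂ) • b) (closedBall 0 1) U := by
    intro t ht
    have hrt : c + r * t ∈ closedBall c r := by
      simpa [abs_of_pos hr] using mul_le_of_le_one_right hr.le (mem_closedBall_zero_iff.mp ht)
    simpa only [hline, mem_ofPred_eq] using hcr hrt
  have hmean := hf.le_circleAverage _ _ hmaps
  simpa only [hline, Real.circleAverage, circleMap_zero, Complex.ofReal_one, one_mul,
    smul_eq_mul] using hmean

lemma stronglyPshOn_of_forall_exists {f : EuclideanSpace ℂ (Fin n) → ℝ}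
    {U : Set (EuclideanSpace ℂ (Fin n))}
    (h : ∀ x ∈ U, ∃ ε > 0, ∃ V, IsOpen V ∧ x ∈ V ∧ V ⊆ U ∧
      ContPshOn (fun z => f z - ε * ‖z‖ ^ 2) V) : StronglyPshOn f U := by
  intro x hx
  obtain ⟨ε, hε, V, hV, hxV, hVU, hf⟩ := h x hx
  exact ⟨ε, hε, V, hV, hxV, hVU, (hf.sub_mul_norm_sub_sq hε.le x).pshOn⟩

lemma isExhaustion_of_tendsto {f : EuclideanSpace ℂ (Fin n) → ℝ} (hf : Continuous f)
    (h : Tendsto f (cocompact _) atTop) : IsExhaustion f := by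
  intro c
  obtain ⟨L, hL, hLc⟩ := mem_cocompact.mp (h (Ioi_mem_atTop c))
  exact hL.of_isClosed_subset (isClosed_le hf continuous_const) fun z (hz : f z ≤ c) =>
    not_not.mp fun hzL => (hLc hzL : c < f z).not_ge hz

lemma differentiable_eval_mvPolynomial (p : MvPolynomial (Fin n) ℂ) :
    Differentiable ℂ fun z : EuclideanSpace ℂ (Fin n) => eval (fun i => z i) p := by
  induction p using MvPolynomial.induction_on with
  | C c => simp
  | add p q hp hq =>
    simp only [map_add]
    exact hp.add hq
  | mul_X p i hp =>
    simp only [map_mul, eval_X]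
    exact hp.mul (by fun_prop)

lemma IsPolyConvex.exists_isBarrier_pos {K : Set (EuclideanSpace ℂ (Fin n))}
    (hKpc : IsPolyConvex K) (hK : IsCompact K) {x : EuclideanSpace ℂ (Fin n)} (hx : x ∉ K) :
    ∃ g, IsBarrier K g ∧ 0 < g x := by
  rw [← hKpc, polyHull, mem_ofPred_eq] at hx
  push Not at hx
  obtain ⟨p, hp⟩ := hx
  have hpd := differentiable_eval_mvPolynomial p
  exact exists_isBarrier_pos_of_norm_lt hK hpd
    (fun z hz => le_csSup (hK.bddAbove_image hpd.continuous.norm.continuousOn)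
      (mem_image_of_mem _ hz)) hp

end EuclideanSpace

/-- Every compact polynomially convex set `K ⊆ ℂⁿ` is the zero set of a nonnegative
plurisubharmonic exhaustion function `ρ : ℂⁿ → [0, ∞)` which is strongly plurisubharmonic on
`ℂⁿ \ K`. -/
theorem stmt_1 (n : ℕ) (K : Set (EuclideanSpace ℂ (Fin n))) (hKc : IsCompact K)
    (hKpc : IsPolyConvex K) :
    ∃ ρ : EuclideanSpace ℂ (Fin n) → ℝ, (∀ z, 0 ≤ ρ z) ∧ PshOn ρ univ ∧ IsExhaustion ρ ∧
      {z | ρ z = 0} = K ∧ StronglyPshOn ρ Kᶜ := by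
  obtain ⟨ρ, hρ0, hρpsh, hρlim, hρK, hρstrong⟩ :=
    exists_contPshOn_exhaustion hKc fun _ hx => hKpc.exists_isBarrier_pos hKc hx
  exact ⟨ρ, hρ0, hρpsh.pshOn, isExhaustion_of_tendsto ρ.continuous hρlim, hρK,
    stronglyPshOn_of_forall_exists hρstrong⟩
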